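/- Let n ≥ 2 be an integer, let 0 < r < R and 0 < r∗, R∗ be real numbers, and let H : [r, R] → ℝ be continuously differentiable with H(t) > 0 for all t ∈ [r, R], H(r) = r∗ and H(R) = R∗. Set α = log(R∗/r∗) / log(R/r). Then ∫_r^R ( (t·H'(t)/H(t))² + n − 1 )^{n/2} · (1/t) dt ≥ (α² + n − 1)^{n/2} · log(R/r). -/

import Mathlib

/-!
In the logarithmic coordinates `t = exp s` and `u s = log (H (exp s))`, the measure `dt / t` becomes
`ds` and the elasticity `t * H' t / H t` becomes `u' s`. Among `C¹` curves `u` with given end values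
the affine one minimises `∫ φ (u' s) ds` for every convex `φ`, by Jensen's inequality. The function
`x ↦ (x ^ 2 + c) ^ (q / 2)` is convex because it is the `q`-th power of the norm of `(x, √c)`.
-/

open MeasureTheory Set Real

section Convexity

theorem convexOn_norm_rpow {E : Type*} [SeminormedAddCommGroup E] [NormedSpace ℝ E]
    {q : ℝ} (hq : 1 ≤ q) : ConvexOn ℝ univ fun x : E ↦ ‖x‖ ^ q := by
  have range_norm_subset : norm '' (univ : Set E) ⊆ Ici 0 :=
    image_subset_iff.2 fun x _ ↦ norm_nonneg x
  have convex_range_norm : Convex ℝ (norm '' (univ : Set E)) :=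
    (isPreconnected_univ.image _ continuous_norm.continuousOn).ordConnected.convex
  exact ((convexOn_rpow hq).subset range_norm_subset convex_range_norm).comp convexOn_univ_norm
    ((monotoneOn_rpow_Ici_of_exponent_nonneg (zero_le_one.trans hq)).mono range_norm_subset)

theorem convexOn_sq_add_rpow_div_two {c q : ℝ} (hc : 0 ≤ c) (hq : 1 ≤ q) :
    ConvexOn ℝ univ fun x : ℝ ↦ (x ^ 2 + c) ^ (q / 2) := by
  have norm_rpow_eq (x : ℝ) : ‖(x + √c * Complex.I : ℂ)‖ ^ q = (x ^ 2 + c) ^ (q / 2) := by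
    rw [Complex.norm_add_mul_I, sq_sqrt hc, rpow_div_two_eq_sqrt q (by positivity)]
  simpa [Function.comp_def, norm_rpow_eq] using
    ((convexOn_norm_rpow (E := ℂ) hq).translate_left (√c * Complex.I)).comp_linearMap
      Complex.ofRealCLM.toLinearMap

end Convexity

section Jensen

variable {E : Type*} [NormedAddCommGroup E] [NormedSpace ℝ E] {u : ℝ → E} {a b : ℝ}

theorem intervalIntegrable_comp_deriv_of_contDiffOn_Icc {F : Type*} [NormedAddCommGroup F]
    {φ : E → F} (hφ : Continuous φ) (hab : a < b) (hu : ContDiffOn ℝ 1 u (Icc a b)) :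
    IntervalIntegrable (fun s ↦ φ (deriv u s)) volume a b := by
  have continuousOn_derivWithin : ContinuousOn (derivWithin u (Icc a b)) (Icc a b) :=
    hu.continuousOn_derivWithin (uniqueDiffOn_Icc hab) le_rfl
  have derivWithin_eq : EqOn (fun s ↦ φ (derivWithin u (Icc a b) s)) (fun s ↦ φ (deriv u s))
      (Ioo a b) := fun s hs ↦
    congrArg φ (derivWithin_of_mem_nhds (Icc_mem_nhds hs.1 hs.2))
  rw [intervalIntegrable_iff_integrableOn_Ioo_of_le hab.le]
  exact ((hφ.comp_continuousOn continuousOn_derivWithin).integrableOn_Icc.mono_set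
    Ioo_subset_Icc_self).congr_fun derivWithin_eq measurableSet_Ioo

theorem map_slope_le_intervalAverage_map_deriv [FiniteDimensional ℝ E] {φ : E → ℝ}
    (hφ : ConvexOn ℝ univ φ) (hab : a < b) (hu : ContDiffOn ℝ 1 u (Icc a b)) :
    φ (slope u a b) ≤ ⨍ s in a..b, φ (deriv u s) := by
  have continuous_φ : Continuous φ := continuousOn_univ.1 (hφ.continuousOn isOpen_univ)
  have integrable_deriv : IntervalIntegrable (deriv u) volume a b :=
    intervalIntegrable_comp_deriv_of_contDiffOn_Icc continuous_id hab hu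
  have integrable_φ_deriv : IntervalIntegrable (fun s ↦ φ (deriv u s)) volume a b :=
    intervalIntegrable_comp_deriv_of_contDiffOn_Icc continuous_φ hab hu
  have slope_eq : slope u a b = ⨍ s in a..b, deriv u s := by
    rw [interval_average_eq, intervalIntegral.integral_deriv_of_contDiffOn_Icc hu hab.le,
      slope_def_module]
  rw [slope_eq, uIoc_of_le hab.le]
  exact hφ.map_set_average_le continuous_φ.continuousOn isClosed_univ (by simpa using hab)
    measure_Ioc_lt_top.ne (by simp) integrable_deriv.1 integrable_φ_deriv.1

end Jensen

section LogarithmicCoordinates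

variable {r R : ℝ}

theorem integral_div_id_eq_integral_comp_exp (hr : 0 < r) (hR : 0 < R) (f : ℝ → ℝ) :
    ∫ t in r..R, f t / t = ∫ s in log r..log R, f (exp s) := by
  have pos_of_mem {t : ℝ} (ht : t ∈ uIcc r R) : 0 < t := (lt_min hr hR).trans_le ht.1
  calc ∫ t in r..R, f t / t = ∫ t in r..R, ((fun s ↦ f (exp s)) ∘ log) t * t⁻¹ :=
        intervalIntegral.integral_congr fun t ht ↦ by
          simp only [Function.comp_apply, exp_log (pos_of_mem ht), div_eq_mul_inv]
    _ = ∫ s in log r..log R, f (exp s) :=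
        intervalIntegral.integral_comp_mul_deriv_of_deriv_nonneg
          (continuousOn_log.mono fun t ht ↦ (pos_of_mem ht).ne')
          (fun t ht ↦ hasDerivAt_log (pos_of_mem (Ioo_subset_Icc_self ht)).ne')
          (fun t ht ↦ (inv_pos.2 (pos_of_mem (Ioo_subset_Icc_self ht))).le)

theorem mapsTo_exp_Icc_log (hr : 0 < r) (hR : 0 < R) :
    MapsTo exp (Icc (log r) (log R)) (Icc r R) := fun _ hs ↦
  ⟨(log_le_iff_le_exp hr).1 hs.1, (le_log_iff_exp_le hR).1 hs.2⟩

theorem mapsTo_exp_Ioo_log (hr : 0 < r) (hR : 0 < R) :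
    MapsTo exp (Ioo (log r) (log R)) (Ioo r R) := fun _ hs ↦
  ⟨(log_lt_iff_lt_exp hr).1 hs.1, (lt_log_iff_exp_lt hR).1 hs.2⟩

/-- The map `H` read in logarithmic coordinates on both its domain and its codomain, so that the
power map `t ↦ C * t ^ α` becomes affine of slope `α`. Since `Real.log x = Real.log |x|`, a negative
`H` is read as `-H`. -/
noncomputable def inLogCoordinates (H : ℝ → ℝ) (s : ℝ) : ℝ := log (H (exp s))

variable {H : ℝ → ℝ}

theorem deriv_inLogCoordinates {s : ℝ} (hH : DifferentiableAt ℝ H (exp s)) (hH₀ : H (exp s) ≠ 0) :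
    deriv (inLogCoordinates H) s = exp s * deriv H (exp s) / H (exp s) :=
  calc deriv (inLogCoordinates H) s = deriv H (exp s) * exp s / H (exp s) :=
        ((hH.hasDerivAt.comp s (hasDerivAt_exp s)).log hH₀).deriv
    _ = exp s * deriv H (exp s) / H (exp s) := by rw [mul_comm]

theorem contDiffOn_inLogCoordinates (hr : 0 < r) (hR : 0 < R) {m : WithTop ℕ∞}
    (hH : ContDiffOn ℝ m H (Icc r R)) (hH₀ : ∀ t ∈ Icc r R, H t ≠ 0) :
    ContDiffOn ℝ m (inLogCoordinates H) (Icc (log r) (log R)) :=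
  (hH.comp contDiff_exp.contDiffOn (mapsTo_exp_Icc_log hr hR)).log
    fun _ hs ↦ hH₀ _ (mapsTo_exp_Icc_log hr hR hs)

theorem slope_inLogCoordinates (hr : 0 < r) (hR : 0 < R) (hHr : H r ≠ 0) (hHR : H R ≠ 0) :
    slope (inLogCoordinates H) (log r) (log R) = log (H R / H r) / log (R / r) := by
  simp only [slope_def_field, inLogCoordinates, exp_log hr, exp_log hR, log_div hR.ne' hr.ne',
    log_div hHR hHr]

theorem integral_map_deriv_inLogCoordinates (φ : ℝ → ℝ) (hr : 0 < r) (hrR : r ≤ R)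
    (hH : DifferentiableOn ℝ H (Ioo r R)) (hH₀ : ∀ t ∈ Ioo r R, H t ≠ 0) :
    ∫ s in log r..log R, φ (deriv (inLogCoordinates H) s) =
      ∫ t in r..R, φ (t * deriv H t / H t) / t := by
  have hR : 0 < R := hr.trans_le hrR
  rw [integral_div_id_eq_integral_comp_exp hr hR fun t ↦ φ (t * deriv H t / H t)]
  refine intervalIntegral.integral_congr_Ioo_of_le (log_le_log hr hrR) fun s hs ↦ congrArg φ ?_
  have exp_mem : exp s ∈ Ioo r R := mapsTo_exp_Ioo_log hr hR hs
  exact deriv_inLogCoordinates (hH.differentiableAt (isOpen_Ioo.mem_nhds exp_mem)) (hH₀ _ exp_mem)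

end LogarithmicCoordinates

theorem stmt13_general {φ : ℝ → ℝ} (hφ : ConvexOn ℝ univ φ) {r R : ℝ} (hr : 0 < r) (hrR : r < R)
    {H : ℝ → ℝ} (hC1 : ContDiffOn ℝ 1 H (Icc r R)) (hH₀ : ∀ t ∈ Icc r R, H t ≠ 0) :
    φ (log (H R / H r) / log (R / r)) * log (R / r) ≤
      ∫ t in r..R, φ (t * deriv H t / H t) / t := by
  have hR : 0 < R := hr.trans hrR
  have log_sub_pos : 0 < log R - log r := sub_pos.2 (log_lt_log hr hrR)
  have jensen : φ (slope (inLogCoordinates H) (log r) (log R)) ≤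
      ⨍ s in log r..log R, φ (deriv (inLogCoordinates H) s) :=
    map_slope_le_intervalAverage_map_deriv hφ (log_lt_log hr hrR)
      (contDiffOn_inLogCoordinates hr hR hC1 hH₀)
  rwa [slope_inLogCoordinates hr hR (hH₀ r (left_mem_Icc.2 hrR.le))
      (hH₀ R (right_mem_Icc.2 hrR.le)),
    interval_average_eq_div,
    integral_map_deriv_inLogCoordinates φ hr hrR.le
      ((hC1.differentiableOn one_ne_zero).mono Ioo_subset_Icc_self)
      (fun t ht ↦ hH₀ t (Ioo_subset_Icc_self ht)),
    le_div_iff₀ log_sub_pos, ← log_div hR.ne' hr.ne'] at jensen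

/-- one-dimensional form of the radial-symmetry proposition.
For `0 < r < R`, positive `r∗, R∗`, and a positive `C¹` function `H` on
`[r, R]` with `H(r) = r∗`, `H(R) = R∗`, setting
`α = log(R∗/r∗)/log(R/r)` one has
`∫_r^R ((t H'(t)/H(t))² + n - 1)^(n/2) dt/t ≥ (α² + n - 1)^(n/2) log(R/r)`. -/
theorem stmt13 (n : ℕ) (hn : 2 ≤ n) (r R rs Rs : ℝ)
    (hr : 0 < r) (hrR : r < R) (hrs : 0 < rs) (hRs : 0 < Rs)
    (H : ℝ → ℝ) (hC1 : ContDiffOn ℝ 1 H (Set.Icc r R))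
    (hpos : ∀ t ∈ Set.Icc r R, 0 < H t)
    (hHr : H r = rs) (hHR : H R = Rs) :
    (∫ t in r..R, ((t * deriv H t / H t) ^ 2 + (n : ℝ) - 1) ^ ((n : ℝ) / 2) / t) ≥
      ((Real.log (Rs / rs) / Real.log (R / r)) ^ 2 + (n : ℝ) - 1) ^ ((n : ℝ) / 2) *
        Real.log (R / r) := by
  have hn₁ : (1 : ℝ) ≤ n := by exact_mod_cast one_le_two.trans hn
  simpa only [add_sub_assoc, hHr, hHR] using stmt13_general
    (convexOn_sq_add_rpow_div_two (sub_nonneg.2 hn₁) hn₁) hr hrR hC1 fun t ht ↦ (hpos t ht).ne'
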